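/- For every n ≥ 2: (i) for every strategy vector s on n nodes whose induced graph G(s) is connected and has m edges, the total distance cost Σ_{u∈V} Σ_{w∈V} d_{G(s)}(u,w) is at least 2n(n−1) − 2m; (ii) the center sponsored spanning star S_n has social cost exactly 2(n−1)², and this is the minimum social cost over all strategy vectors on n nodes. -/

import Mathlib

/-!
Two distinct nodes are at distance `1` if adjacent and at least `2` otherwise, so node `u` pays at
least `2 (N - 1) - deg u` for distances on `N` nodes. Summing over `u` gives part (i).

For the social cost, let `inD v` be the number of agents buying an edge to `v`. Grouped by bought
endpoint, the edge prices add up to `∑ v, inD v * (deg v - 1)`. As `∑ v, deg v = 2 * ∑ v, inD v`,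
the claim `2 (N - 1) ^ 2 ≤ social` reduces to `∑ v, inD v * (3 - deg v) ≤ 2 N - 2`. Each summand is
at most `2` and at most `1` if `v` buys an edge (`inD_mul_le`); it is `0` if nobody buys an edge to
`v`. If some `v` has `inD v = 0`, the claim follows. Otherwise every agent has a buyer,
hence some `w` buys an edge to an agent and some `x ≠ w` buys an edge to `w`; these two agents both
contribute at most `1`. Connectivity plays no role in this bound, because the lower bound on
distances also holds for extended distances.
-/

/-!
Degree price network creation games (degNCG / degkNCG / degAOG / degkAOG).

A strategy vector assigns to each agent `u` a finite set `st u` of nodes to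
which `u` buys an edge.  The induced graph has an edge `{u,v}` iff `v ∈ st u`
or `u ∈ st v`.  The cost of agent `u` is the sum of `deg v - 1` over all `v`
to which `u` bought an edge, plus the sum of (extended, i.e. `⊤` when
unreachable) graph distances from `u` to all nodes.
-/

/-- A strategy vector: each agent picks the set of nodes it buys edges to. -/
abbrev Strategy (V : Type) := V → Finset V

variable {V : Type} [Fintype V] [DecidableEq V]

/-- The network induced by a strategy vector: `{u,v}` is an edge iff
`v ∈ st u` or `u ∈ st v`. -/
def netG (st : Strategy V) : SimpleGraph V :=
  SimpleGraph.fromRel (fun u v => v ∈ st u)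

/-- The degree of a node in the induced network. -/
noncomputable def deg (st : Strategy V) (v : V) : ℕ :=
  letI : DecidableRel (netG st).Adj := Classical.decRel _
  (netG st).degree v

/-- The cost of agent `u`: degree-prices of the bought edges plus the sum of
the distances to all nodes (`⊤` if some node is unreachable). -/
noncomputable def cost (st : Strategy V) (u : V) : ℕ∞ :=
  ((∑ v ∈ st u, (deg st v - 1) : ℕ) : ℕ∞) + ∑ w, (netG st).edist u w

/-- A strategy vector is valid if nobody buys a self-loop and every edge has
exactly one owner. -/
def Valid (st : Strategy V) : Prop :=
  (∀ u, u ∉ st u) ∧ (∀ u v, v ∈ st u → u ∉ st v)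

/-- Pure Nash equilibrium of the degNCG: no agent can strictly decrease her
cost by unilaterally switching to any other strategy. -/
def IsNE (st : Strategy V) : Prop :=
  ∀ (u : V) (t : Finset V), u ∉ t →
    cost st u ≤ cost (Function.update st u t) u

/-- `k`-local Nash equilibrium of the degkNCG: no agent can strictly decrease
her cost by a deviation in which every newly bought edge goes to a node at
distance at most `k` in the current graph. -/
def IskNE (k : ℕ) (st : Strategy V) : Prop :=
  ∀ (u : V) (t : Finset V), u ∉ t →
    (∀ v ∈ t \ st u, (netG st).edist u v ≤ k) →
    cost st u ≤ cost (Function.update st u t) u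

/-- Equilibrium of the add-only game degAOG: no agent can strictly decrease
her cost by adding edges (deviations are supersets of the current strategy). -/
def IsAOEq (st : Strategy V) : Prop :=
  ∀ (u : V) (t : Finset V), u ∉ t → st u ⊆ t →
    cost st u ≤ cost (Function.update st u t) u

/-- Equilibrium of the `k`-local add-only game degkAOG. -/
def IskAOEq (k : ℕ) (st : Strategy V) : Prop :=
  ∀ (u : V) (t : Finset V), u ∉ t → st u ⊆ t →
    (∀ v ∈ t \ st u, (netG st).edist u v ≤ k) →
    cost st u ≤ cost (Function.update st u t) u

/-- The social cost: the sum of all agents' costs. -/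
noncomputable def social (st : Strategy V) : ℕ∞ :=
  ∑ u, cost st u

/-- The center sponsored spanning star on `n + 2` nodes: agent `0` buys an
edge to every other agent, everybody else buys nothing. -/
def starStrat (n : ℕ) : Strategy (Fin (n + 2)) := fun u =>
  if u = 0 then ({0} : Finset (Fin (n + 2)))ᶜ else ∅

/-- The number of edges of the induced network. -/
noncomputable def numEdges (st : Strategy V) : ℕ :=
  letI : DecidableRel (netG st).Adj := Classical.decRel _
  (netG st).edgeFinset.card

/-! ### Distances, degrees and bought edges -/

/-- The lower bound on the distance of two nodes that depends only on equality and adjacency. -/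
noncomputable def lowDist (st : Strategy V) (u w : V) : ℕ :=
  letI : DecidableRel (netG st).Adj := Classical.decRel _
  if u = w then 0 else if (netG st).Adj u w then 1 else 2

/-- The number of agents that buy an edge to `v`. -/
def inD (st : Strategy V) (v : V) : ℕ := (Finset.univ.filter fun u => v ∈ st u).card

lemma netG_adj (st : Strategy V) (u v : V) :
    (netG st).Adj u v ↔ u ≠ v ∧ (v ∈ st u ∨ u ∈ st v) := by
  simp [netG, SimpleGraph.fromRel_adj]

lemma lowDist_le_edist (st : Strategy V) (u w : V) :
    (lowDist st u w : ℕ∞) ≤ (netG st).edist u w := by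
  unfold lowDist
  split_ifs with h1 h2
  · simp
  · rw [SimpleGraph.edist_eq_one_iff_adj.2 h2]; simp
  · by_contra! hlt
    have h0 : (netG st).edist u w ≠ 0 := by simpa using h1
    have h1' : (netG st).edist u w ≠ 1 := fun h => h2 (SimpleGraph.edist_eq_one_iff_adj.1 h)
    generalize (netG st).edist u w = e at *
    induction e using ENat.recTopCoe with
    | top => simp at hlt
    | coe k =>
      norm_cast at *
      omega

lemma sum_lowDist (st : Strategy V) (u : V) :
    (∑ w, lowDist st u w) + deg st u + 2 = 2 * Fintype.card V := by
  classical
  have hdeg : deg st u = ∑ w, if (netG st).Adj u w then 1 else 0 := by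
    rw [Finset.sum_boole, deg, ← SimpleGraph.card_neighborFinset_eq_degree]
    simp only [SimpleGraph.neighborFinset_eq_filter, Nat.cast_id]
  have h2 : (∑ w, if u = w then 2 else 0) = 2 := by simp
  have hN : 2 * Fintype.card V = ∑ _w : V, 2 := by simp [mul_comm]
  rw [hdeg, hN]
  conv_lhs => rw [← h2]
  rw [← Finset.sum_add_distrib, ← Finset.sum_add_distrib]
  refine Finset.sum_congr rfl fun w _ => ?_
  unfold lowDist
  by_cases h : u = w
  · subst h; simp
  · by_cases h' : (netG st).Adj u w <;> simp [h, h']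

lemma sum_deg (st : Strategy V) : ∑ u, deg st u = 2 * numEdges st := by
  classical
  unfold deg numEdges
  exact SimpleGraph.sum_degrees_eq_twice_card_edges _

lemma deg_eq (st : Strategy V) (hv : Valid st) (v : V) :
    deg st v = inD st v + (st v).card := by
  classical
  have hdisj : Disjoint (Finset.univ.filter fun u => v ∈ st u) (st v) := by
    rw [Finset.disjoint_left]
    intro a ha
    exact hv.2 a v (by simpa using ha)
  rw [inD, ← Finset.card_union_of_disjoint hdisj, deg,
    ← SimpleGraph.card_neighborFinset_eq_degree]
  congr 1
  ext w
  simp only [SimpleGraph.mem_neighborFinset, netG_adj, Finset.mem_union, Finset.mem_filter,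
    Finset.mem_univ, true_and]
  constructor
  · tauto
  · intro h
    refine ⟨?_, h.symm⟩
    rintro rfl
    exact hv.1 v (by tauto)

/-- Summing over bought edges means summing over nodes, weighted with the number of buyers. -/
lemma sum_bought (st : Strategy V) (f : V → ℕ) :
    ∑ u, ∑ v ∈ st u, f v = ∑ v, inD st v * f v := by
  rw [Finset.sum_comm' (t' := Finset.univ) (s' := fun v => Finset.univ.filter fun u => v ∈ st u)
    (by simp)]
  simp [inD]

/-! ### Lower bound on the social cost -/

/-- The contribution of a node is at most `2`, and at most `1` if the node buys an edge. -/
lemma inD_mul_le (st : Strategy V) (hv : Valid st) (v : V) :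
    (inD st v : ℤ) * (3 - deg st v) ≤ if st v = ∅ then 2 else 1 := by
  rw [deg_eq st hv]
  generalize inD st v = a
  split_ifs with h
  · rw [h]
    push_cast [Finset.card_empty]
    rcases Nat.lt_or_ge a 3 with h | h
    · interval_cases a <;> norm_num
    · nlinarith [(by exact_mod_cast h : (3 : ℤ) ≤ a)]
  · have hb : (1 : ℤ) ≤ (st v).card := by
      exact_mod_cast Finset.card_pos.2 (Finset.nonempty_iff_ne_empty.2 h)
    push_cast
    rcases Nat.lt_or_ge a 2 with h | h
    · interval_cases a <;> norm_num
      omega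
    · nlinarith [(by exact_mod_cast h : (2 : ℤ) ≤ a)]

/-- A sum of terms bounded by `2` is at most `2 N - 2` if two units are missing on a subset. -/
lemma sum_le_of_deficit (g : V → ℤ) (h2 : ∀ v, g v ≤ 2) (s : Finset V)
    (hs : 2 ≤ ∑ v ∈ s, (2 - g v)) : ∑ v, g v ≤ 2 * Fintype.card V - 2 := by
  have h := Finset.sum_le_sum_of_subset_of_nonneg (Finset.subset_univ s)
    (f := fun v => 2 - g v) (fun v _ _ => by linarith [h2 v])
  have h3 : ∑ v, (2 - g v) = 2 * Fintype.card V - ∑ v, g v := by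
    simp [Finset.sum_sub_distrib, mul_comm]
  linarith

lemma sum_inD_mul_le [Nonempty V] (st : Strategy V) (hv : Valid st) :
    ∑ v, (inD st v : ℤ) * (3 - deg st v) ≤ 2 * Fintype.card V - 2 := by
  have h2 : ∀ v, (inD st v : ℤ) * (3 - deg st v) ≤ 2 := fun v =>
    (inD_mul_le st hv v).trans (by split_ifs <;> norm_num)
  have h1 : ∀ v w, w ∈ st v → (inD st v : ℤ) * (3 - deg st v) ≤ 1 := fun v w hw => by
    have := inD_mul_le st hv v
    rwa [if_neg (Finset.ne_empty_of_mem hw)] at this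
  by_cases h0 : ∃ v, inD st v = 0
  · obtain ⟨v, hv0⟩ := h0
    exact sum_le_of_deficit _ h2 {v} (by simp [hv0])
  · push Not at h0
    have hbuy : ∀ v, ∃ u, v ∈ st u := fun v => by
      obtain ⟨u, hu⟩ := Finset.card_pos.1 (Nat.pos_of_ne_zero (h0 v))
      exact ⟨u, by simpa using hu⟩
    obtain ⟨w, hw⟩ := hbuy (Classical.arbitrary V)
    obtain ⟨x, hx⟩ := hbuy w
    have hne : w ≠ x := by
      rintro rfl
      exact hv.1 _ hx
    refine sum_le_of_deficit _ h2 {w, x} ?_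
    rw [Finset.sum_pair hne]
    linarith [h1 w _ hw, h1 x _ hx]

/-- The social cost with each distance replaced by its lower bound `lowDist`. -/
lemma lower_bound [Nonempty V] (st : Strategy V) (hv : Valid st) :
    (2 * (Fintype.card V - 1) ^ 2 : ℤ) ≤
      ((∑ u, (∑ v ∈ st u, (deg st v - 1) + ∑ w, lowDist st u w) : ℕ) : ℤ) := by
  have hA := sum_inD_mul_le st hv
  have hprice : ((∑ u, ∑ v ∈ st u, (deg st v - 1) : ℕ) : ℤ)
      = ∑ v, (inD st v : ℤ) * (deg st v - 1) := by
    rw [sum_bought]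
    push_cast
    refine Finset.sum_congr rfl fun v _ => ?_
    -- The truncated subtraction `deg st v - 1` is harmless: a node of degree `0` has no buyer.
    rcases Nat.eq_zero_or_pos (inD st v) with h | h
    · simp [h]
    · rw [Nat.cast_sub (by rw [deg_eq st hv]; omega)]
      simp
  have hdeg : ∑ v, (deg st v : ℤ) = 2 * ∑ v, (inD st v : ℤ) := by
    have h1 := sum_bought st fun _ => 1
    simp only [Finset.sum_const, smul_eq_mul, mul_one] at h1
    have h2 : ∑ v, deg st v = 2 * ∑ v, inD st v := by
      simp only [deg_eq st hv, Finset.sum_add_distrib, h1]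
      ring
    exact_mod_cast h2
  have hlow : ((∑ u, ∑ w, lowDist st u w : ℕ) : ℤ)
      = (2 * Fintype.card V - 2) * Fintype.card V - ∑ v, (deg st v : ℤ) := by
    have : ∀ u, ((∑ w, lowDist st u w : ℕ) : ℤ) = (2 * Fintype.card V - 2) - deg st u := by
      intro u
      have := sum_lowDist st u
      omega
    rw [Nat.cast_sum, Finset.sum_congr rfl fun u _ => this u]
    simp only [Finset.sum_sub_distrib, Finset.sum_const, Finset.card_univ, nsmul_eq_mul]
    ring
  have hsplit : ∑ v, (inD st v : ℤ) * (3 - deg st v)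
      = 2 * ∑ v, (inD st v : ℤ) - ∑ v, (inD st v : ℤ) * (deg st v - 1) := by
    rw [Finset.mul_sum, ← Finset.sum_sub_distrib]
    exact Finset.sum_congr rfl fun v _ => by ring
  rw [Finset.sum_add_distrib, Nat.cast_add, hprice, hlow, hdeg]
  nlinarith

lemma low_le_social (st : Strategy V) :
    ((∑ u, (∑ v ∈ st u, (deg st v - 1) + ∑ w, lowDist st u w) : ℕ) : ℕ∞) ≤ social st := by
  rw [Nat.cast_sum]
  refine Finset.sum_le_sum fun u _ => ?_
  rw [Nat.cast_add, cost]
  gcongr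
  rw [Nat.cast_sum]
  exact Finset.sum_le_sum fun w _ => lowDist_le_edist st u w

/-! ### The center sponsored star -/

lemma starStrat_adj (n : ℕ) (u v : Fin (n + 2)) :
    (netG (starStrat n)).Adj u v ↔ u ≠ v ∧ (u = 0 ∨ v = 0) := by
  rw [netG_adj]
  unfold starStrat
  by_cases hu : u = 0 <;> by_cases hv : v = 0 <;> simp [hu, hv]

lemma starStrat_edist (n : ℕ) (u v : Fin (n + 2)) :
    (netG (starStrat n)).edist u v = lowDist (starStrat n) u v := by
  refine le_antisymm ?_ (lowDist_le_edist _ _ _)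
  unfold lowDist
  split_ifs with h1 h2
  · simp [h1]
  · rw [SimpleGraph.edist_eq_one_iff_adj.2 h2]; simp
  · rw [starStrat_adj] at h2
    push Not at h2
    obtain ⟨hu, hv⟩ := h2 h1
    refine (SimpleGraph.edist_triangle (v := 0)).trans ?_
    rw [SimpleGraph.edist_eq_one_iff_adj.2 ((starStrat_adj n u 0).2 ⟨hu, Or.inr rfl⟩),
      SimpleGraph.edist_eq_one_iff_adj.2 ((starStrat_adj n 0 v).2 ⟨hv.symm, Or.inl rfl⟩)]
    norm_num

lemma starStrat_valid (n : ℕ) : Valid (starStrat n) := by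
  constructor
  · intro u
    unfold starStrat
    split_ifs with h <;> simp [h]
  · intro u v
    unfold starStrat
    by_cases hu : u = 0 <;> by_cases hv : v = 0 <;> simp [hu, hv]

lemma starStrat_inD (n : ℕ) (v : Fin (n + 2)) :
    inD (starStrat n) v = if v = 0 then 0 else 1 := by
  have h : ∀ u, v ∈ starStrat n u ↔ u = 0 ∧ v ≠ 0 := by
    intro u
    unfold starStrat
    split_ifs with hu <;> simp [hu]
  simp only [inD, h]
  split_ifs with hv <;> simp [hv, Finset.filter_eq']

lemma starStrat_deg (n : ℕ) (v : Fin (n + 2)) :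
    deg (starStrat n) v = if v = 0 then n + 1 else 1 := by
  rw [deg_eq _ (starStrat_valid n), starStrat_inD]
  unfold starStrat
  split_ifs <;> simp [Finset.card_compl]

lemma starStrat_cost (n : ℕ) (u : Fin (n + 2)) :
    cost (starStrat n) u = ((if u = 0 then n + 1 else 2 * n + 1 : ℕ) : ℕ∞) := by
  have hprice : ∑ v ∈ starStrat n u, (deg (starStrat n) v - 1) = 0 := by
    refine Finset.sum_eq_zero fun v hv => ?_
    have hv0 : v ≠ 0 := by
      unfold starStrat at hv
      split_ifs at hv <;> simp_all
    simp [starStrat_deg, hv0]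
  have hl := sum_lowDist (starStrat n) u
  rw [starStrat_deg, Fintype.card_fin] at hl
  simp only [cost, hprice, starStrat_edist, Nat.cast_zero, zero_add]
  rw [← Nat.cast_sum]
  congr 1
  split_ifs at hl ⊢ <;> omega

lemma starStrat_social (n : ℕ) : social (starStrat n) = ((2 * (n + 1) ^ 2 : ℕ) : ℕ∞) := by
  simp only [social, starStrat_cost]
  rw [← Nat.cast_sum, Fin.sum_univ_succ]
  simp only [if_true, Fin.succ_ne_zero, if_false, Finset.sum_const, Finset.card_univ,
    Fintype.card_fin, smul_eq_mul]
  congr 1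
  ring

/-! ### Optimality of the star -/

/-- on `n + 2 ≥ 2` nodes: (i) for every strategy vector whose
induced graph is connected and has `m` edges, the total distance cost is at
least `2n(n-1) - 2m`; (ii) the center sponsored spanning star has social cost
exactly `2(n-1)²`, which is the minimum social cost over all strategy
vectors. -/
theorem star_opt (n : ℕ) :
    (∀ st : Strategy (Fin (n + 2)), Valid st → (netG st).Connected →
      (2 * (n + 2) * (n + 1) : ℤ) - 2 * (numEdges st : ℤ) ≤
        ∑ u : Fin (n + 2), ∑ w : Fin (n + 2), ((netG st).dist u w : ℤ)) ∧
    social (starStrat n) = (2 * (n + 1) ^ 2 : ℕ∞) ∧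
    (∀ st : Strategy (Fin (n + 2)), Valid st →
      social (starStrat n) ≤ social st) := by
  refine ⟨fun st _ hc => ?_, ?_, fun st hv => ?_⟩
  · have hle : ∀ u w, lowDist st u w ≤ (netG st).dist u w := fun u w => by
      have h := lowDist_le_edist st u w
      rw [← (hc u w).coe_dist_eq_edist] at h
      exact_mod_cast h
    have h1 : ∑ u, ((∑ w, lowDist st u w) + deg st u + 2) = (n + 2) * (2 * (n + 2)) := by
      simp [sum_lowDist]
    rw [Finset.sum_add_distrib, Finset.sum_add_distrib, sum_deg] at h1
    simp only [Finset.sum_const, Finset.card_univ, Fintype.card_fin, smul_eq_mul] at h1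
    have h2 : ∑ u, ∑ w, lowDist st u w ≤ ∑ u, ∑ w, (netG st).dist u w :=
      Finset.sum_le_sum fun u _ => Finset.sum_le_sum fun w _ => hle u w
    zify at h1 h2
    nlinarith
  · rw [starStrat_social]
    push_cast
    rfl
  · rw [starStrat_social]
    refine le_trans ?_ (low_le_social st)
    have h := lower_bound st hv
    rw [Fintype.card_fin] at h
    have h' : (2 * (n + 1) ^ 2 : ℤ) ≤
        ((∑ u, (∑ v ∈ st u, (deg st v - 1) + ∑ w, lowDist st u w) : ℕ) : ℤ) := by
      refine le_trans (le_of_eq ?_) h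
      push_cast
      ring
    exact_mod_cast h'
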